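/- If every countable graph having no nonempty induced subgraph in which every vertex has infinite degree admits an unfriendly partition, then every graph with conditions admits an ω-unfriendly partition. -/

import Mathlib

open Cardinal

universe u

/-- `π` is an unfriendly partition of `G`. -/
def UnfriendlyPartition {V : Type u} (G : SimpleGraph V) (π : V → Fin 2) : Prop :=
  ∀ x : V, #{y : V // G.Adj x y ∧ π y = π x} ≤ #{y : V // G.Adj x y ∧ π y ≠ π x}

/-- `π` is a `μ`-unfriendly partition of the graph with conditions `(G, C)`:
for each vertex `x`, if `π x = 0` then `κ_x + |{neighbours of colour 0}|` is at most
`λ_x + |{neighbours of colour 1}|`, and symmetrically if `π x = 1`, except possibly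
when the two compared cardinals are both `≥ μ`. -/
def CondMuUnfriendly {V : Type u} (G : SimpleGraph V) (C : V → Cardinal.{u} × Cardinal.{u})
    (μ : Cardinal.{u}) (π : V → Fin 2) : Prop :=
  ∀ x : V,
    (π x = 0 →
      (C x).1 + #{y : V // G.Adj x y ∧ π y = 0} ≤ (C x).2 + #{y : V // G.Adj x y ∧ π y = 1} ∨
      (μ ≤ (C x).1 + #{y : V // G.Adj x y ∧ π y = 0} ∧
        μ ≤ (C x).2 + #{y : V // G.Adj x y ∧ π y = 1})) ∧
    (π x = 1 →
      (C x).2 + #{y : V // G.Adj x y ∧ π y = 1} ≤ (C x).1 + #{y : V // G.Adj x y ∧ π y = 0} ∨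
      (μ ≤ (C x).1 + #{y : V // G.Adj x y ∧ π y = 0} ∧
        μ ≤ (C x).2 + #{y : V // G.Adj x y ∧ π y = 1}))

/-!
ω-unfriendliness does not distinguish infinite cardinals, so all counts may be taken in `ℕ∞`, and
a coloured vertex whose count of opposite neighbours is infinite stays satisfied however the
colouring is extended. Consequently, in a maximal partial colouring whose coloured vertices are
all definitively satisfied, no vertex is left uncoloured: it would lie in a countable set `K` of
uncoloured vertices, each having either all of its uncoloured neighbours or infinitely many
neighbours in `K`, and a colouring of `K` that takes the colours outside `K` as conditions would
be an extension.

In a countable graph, the largest subgraph with all degrees infinite has a colouring in which each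
vertex sees both colours infinitely often. What remains has no such subgraph, and there conditions
are simulated by joining vertices to private neighbours in a gadget, still without such a
subgraph, whose colours are the same, up to exchanging the two colours, in every unfriendly
partition.
-/

section CountableFamilies

variable {α ι : Type*}

theorem encard_setOf_natCast_lt (c : ℕ∞) : {i : ℕ | (i : ℕ∞) < c}.encard = c := by
  induction c with
  | top => simp [Set.infinite_univ]
  | coe n => simpa only [Nat.cast_lt] using Set.Nat.encard_range n

theorem exists_pairwise_disjoint_encard_eq [Countable ι] (c : ι → ℕ∞) :
    ∃ P : ι → Set ℕ, Pairwise (Function.onFun Disjoint P) ∧ ∀ i, (P i).encard = c i := by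
  obtain ⟨e, he⟩ := exists_injective_nat ι
  refine ⟨fun i => Nat.pair (e i) '' {k | (k : ℕ∞) < c i}, fun i j hij => ?_, fun i => ?_⟩
  · rw [Function.onFun, Set.disjoint_left]
    rintro _ ⟨k, -, rfl⟩ ⟨l, -, hl⟩
    exact hij (he (Nat.pair_eq_pair.1 hl).1.symm)
  · have hinj : Function.Injective (Nat.pair (e i)) := fun k l h => (Nat.pair_eq_pair.1 h).2
    rw [hinj.encard_image, encard_setOf_natCast_lt]

theorem exists_injective_forall_mem_of_infinite [Countable ι] (S : ι → Set α)
    (hS : ∀ i, (S i).Infinite) : ∃ f : ι → α, Function.Injective f ∧ ∀ i, f i ∈ S i := by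
  classical
  obtain ⟨e, he⟩ := exists_injective_nat ι
  choose t hts hcard using fun i => (hS i).exists_subset_card_eq (e i + 1)
  -- In a finite set of indices, the one with the largest code alone has enough candidates.
  have hall : ∀ s : Finset ι, s.card ≤ (s.biUnion t).card := by
    intro s
    rcases s.eq_empty_or_nonempty with rfl | hs
    · exact Nat.zero_le _
    obtain ⟨i, hi, hmax⟩ := s.exists_max_image e hs
    calc s.card = (s.image e).card := (Finset.card_image_of_injective s he).symm
      _ ≤ (Finset.range (e i + 1)).card := Finset.card_le_card <| Finset.image_subset_iff.2
          fun j hj => Finset.mem_range_succ_iff.2 (hmax j hj)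
      _ = (t i).card := by rw [Finset.card_range, hcard]
      _ ≤ (s.biUnion t).card := Finset.card_le_card (Finset.subset_biUnion_of_mem t hi)
  obtain ⟨f, hf, hft⟩ := (Finset.all_card_le_biUnion_card_iff_exists_injective t).1 hall
  exact ⟨f, hf, fun i => hts i (hft i)⟩

theorem exists_bool_splitting_of_infinite [Countable ι] (S : ι → Set α)
    (hS : ∀ i, (S i).Infinite) :
    ∃ f : α → Bool, ∀ i b, (S i ∩ f ⁻¹' {b}).Infinite := by
  classical
  obtain ⟨g, hg, hgS⟩ := exists_injective_forall_mem_of_infinite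
    (fun k : ι × Bool × ℕ => S k.1) fun k => hS k.1
  refine ⟨fun y => decide (∃ i n, g (i, true, n) = y), fun i b => ?_⟩
  have hinj : Function.Injective fun n : ℕ => g (i, b, n) := fun m n h => by
    simpa using hg h
  refine (Set.infinite_range_of_injective hinj).mono ?_
  rintro _ ⟨n, rfl⟩
  refine ⟨hgS (i, b, n), ?_⟩
  cases b <;> simp [hg.eq_iff]

theorem exists_countable_closed (T : α → Set α) (hT : ∀ x, (T x).Countable) (a : α) :
    ∃ K : Set α, K.Countable ∧ a ∈ K ∧ ∀ x ∈ K, T x ⊆ K := by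
  let step : Set α → Set α := fun s => ⋃ x ∈ s, T x
  refine ⟨⋃ n, step^[n] {a}, Set.countable_iUnion fun n => ?_, Set.mem_iUnion.2 ⟨0, rfl⟩, ?_⟩
  · induction n with
    | zero => exact Set.countable_singleton a
    | succ n ih =>
      rw [Function.iterate_succ_apply']
      exact ih.biUnion fun x _ => hT x
  · intro x hx y hy
    obtain ⟨n, hn⟩ := Set.mem_iUnion.1 hx
    refine Set.mem_iUnion.2 ⟨n + 1, ?_⟩
    rw [Function.iterate_succ_apply']
    exact Set.mem_biUnion hn hy

end CountableFamilies

section PartialColourings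

variable {V : Type*} {G : SimpleGraph V} {C : V → Bool → ℕ∞} {A A' : Bool → Set V} {x : V}
  {b : Bool}

/-- The `b`-side of the comparison at `x`: the condition of `x` for the colour `b` plus the number
of neighbours of `x` that have colour `b` in the partial colouring with colour classes `A`. It is
valued in `ℕ∞` because all infinite cardinals play the same role. -/
noncomputable def tally (G : SimpleGraph V) (C : V → Bool → ℕ∞) (A : Bool → Set V) (x : V)
    (b : Bool) : ℕ∞ :=
  C x b + (G.neighborSet x ∩ A b).encard

/-- The colour classes of a total colouring. -/
def colourClass (q : V → Bool) (b : Bool) : Set V := q ⁻¹' {b}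

/-- The colouring `q` is an ω-unfriendly partition of `G` with conditions `C`; in `ℕ∞` the proviso
on two infinite cardinals is automatic. -/
def ENatUnfriendly (G : SimpleGraph V) (C : V → Bool → ℕ∞) (q : V → Bool) : Prop :=
  ∀ x, tally G C (colourClass q) x (q x) ≤ tally G C (colourClass q) x (!q x)

/-- The vertex `x`, if coloured `b`, is satisfied in every extension of the partial colouring `A`:
either it already has infinite opposite tally, or all its neighbours are coloured. -/
def Settled (G : SimpleGraph V) (C : V → Bool → ℕ∞) (A : Bool → Set V) (x : V) (b : Bool) :
    Prop :=
  tally G C A x (!b) = ⊤ ∨ (G.neighborSet x ⊆ ⋃ d, A d ∧ tally G C A x b ≤ tally G C A x (!b))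

/-- A partial colouring, given by its colour classes, all of whose coloured vertices are settled. -/
structure IsSettledColouring (G : SimpleGraph V) (C : V → Bool → ℕ∞) (A : Bool → Set V) :
    Prop where
  disjoint : Pairwise (Function.onFun Disjoint A)
  settled : ∀ b, ∀ x ∈ A b, Settled G C A x b

/-- The partial colouring that colours `K` by `ρ` in addition to `A`. -/
def extend (A : Bool → Set V) {K : Set V} (ρ : K → Bool) (b : Bool) : Set V :=
  A b ∪ Subtype.val '' colourClass ρ b

theorem eq_of_mem_of_mem (hA : Pairwise (Function.onFun Disjoint A)) {d : Bool} (hb : x ∈ A b)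
    (hd : x ∈ A d) : b = d :=
  hA.eq (Set.not_disjoint_iff.2 ⟨x, hb, hd⟩)

theorem tally_mono (hle : A ≤ A') : tally G C A x b ≤ tally G C A' x b := by
  unfold tally
  gcongr
  exact hle b

theorem tally_eq_of_neighborSet_subset (hle : A ≤ A') (hA' : Pairwise (Function.onFun Disjoint A'))
    (hN : G.neighborSet x ⊆ ⋃ d, A d) : tally G C A' x b = tally G C A x b := by
  refine le_antisymm ?_ (tally_mono hle)
  unfold tally
  gcongr 1
  refine Set.encard_le_encard fun y ⟨hxy, hy⟩ => ⟨hxy, ?_⟩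
  obtain ⟨d, hd⟩ := Set.mem_iUnion.1 (hN hxy)
  rwa [eq_of_mem_of_mem hA' hy (hle d hd)]

theorem tally_eq_top_of_infinite (h : (G.neighborSet x ∩ A b).Infinite) :
    tally G C A x b = ⊤ := by
  rw [tally, h.encard_eq, add_top]

theorem tally_not_eq_top_of_infinite (hinf : (G.neighborSet x ∩ ⋃ d, A d).Infinite)
    (hle : tally G C A x b ≤ tally G C A x (!b)) : tally G C A x (!b) = ⊤ := by
  obtain ⟨d, hd⟩ : ∃ d, (G.neighborSet x ∩ A d).Infinite := by
    by_contra! hfin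
    exact hinf (Set.inter_iUnion .. ▸ Set.finite_iUnion hfin)
  have htop := tally_eq_top_of_infinite (C := C) hd
  rcases Bool.eq_or_eq_not d b with rfl | rfl
  · exact top_le_iff.1 (htop.ge.trans hle)
  · exact htop

theorem Settled.mono (h : Settled G C A x b) (hle : A ≤ A')
    (hA' : Pairwise (Function.onFun Disjoint A')) : Settled G C A' x b := by
  rcases h with htop | ⟨hN, hxb⟩
  · exact Or.inl (top_le_iff.1 (htop.symm.trans_le (tally_mono hle)))
  · refine Or.inr ⟨hN.trans (Set.iUnion_mono hle), ?_⟩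
    rwa [tally_eq_of_neighborSet_subset hle hA' hN, tally_eq_of_neighborSet_subset hle hA' hN]

section Extend

variable {K : Set V} {ρ : K → Bool}

theorem le_extend : A ≤ extend A ρ := fun _ => Set.subset_union_left

theorem iUnion_extend : ⋃ b, extend A ρ b = (⋃ b, A b) ∪ K := by
  have hK : ⋃ b, Subtype.val '' colourClass ρ b = K := by
    simp only [colourClass, ← Set.image_iUnion, ← Set.preimage_iUnion, Set.iUnion_of_singleton,
      Set.preimage_univ, Set.image_univ, Subtype.range_coe]
  simp only [extend, Set.iUnion_union_distrib, hK]

theorem pairwise_disjoint_extend (hA : Pairwise (Function.onFun Disjoint A))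
    (hK : ∀ b, Disjoint (A b) K) : Pairwise (Function.onFun Disjoint (extend A ρ)) := by
  intro b d hbd
  rw [Function.onFun, Set.disjoint_left]
  rintro y (hy | ⟨z, hz, rfl⟩) (hy' | ⟨z', hz', hzz'⟩)
  · exact hbd (eq_of_mem_of_mem hA hy hy')
  · exact Set.disjoint_left.1 (hK b) hy (hzz' ▸ z'.2)
  · exact Set.disjoint_left.1 (hK d) hy' z.2
  · obtain rfl := Subtype.ext hzz'
    exact hbd (hz.symm.trans hz')

theorem tally_extend (hK : ∀ b, Disjoint (A b) K) (x : K) (b : Bool) :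
    tally G C (extend A ρ) x b =
      tally (G.induce K) (fun y => tally G C A y) (colourClass ρ) x b := by
  have hsplit : G.neighborSet x ∩ extend A ρ b = G.neighborSet x ∩ A b ∪
      Subtype.val '' ((G.induce K).neighborSet x ∩ colourClass ρ b) := by
    rw [extend, Set.inter_union_distrib_left, ← Set.image_preimage_inter]
    rfl
  have hdisj : Disjoint (G.neighborSet x ∩ A b)
      (Subtype.val '' ((G.induce K).neighborSet x ∩ colourClass ρ b)) :=
    (hK b).mono Set.inter_subset_right (Subtype.coe_image_subset K _)
  simp only [tally]
  rw [hsplit, Set.encard_union_eq hdisj, Subtype.val_injective.encard_image, add_assoc]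

theorem IsSettledColouring.extend (hA : IsSettledColouring G C A) (hK : ∀ b, Disjoint (A b) K)
    (hρ : ENatUnfriendly (G.induce K) (fun y => tally G C A y) ρ)
    (hN : ∀ x ∈ K, G.neighborSet x ⊆ (⋃ b, A b) ∪ K ∨ (G.neighborSet x ∩ K).Infinite) :
    IsSettledColouring G C (extend A ρ) := by
  have hdisj := pairwise_disjoint_extend (ρ := ρ) hA.disjoint hK
  refine ⟨hdisj, ?_⟩
  rintro b _ (hx | ⟨x, rfl, rfl⟩)
  · exact (hA.settled b _ hx).mono le_extend hdisj
  have hle := hρ x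
  rw [← tally_extend hK, ← tally_extend hK] at hle
  rcases hN x x.2 with hsub | hinf
  · exact Or.inr ⟨hsub.trans iUnion_extend.ge, hle⟩
  · refine Or.inl (tally_not_eq_top_of_infinite (hinf.mono ?_) hle)
    rw [iUnion_extend]
    exact Set.inter_subset_inter_right _ Set.subset_union_right

end Extend

theorem IsSettledColouring.exists_eNatUnfriendly (hA : IsSettledColouring G C A)
    (hcover : ⋃ b, A b = Set.univ) : ∃ q, ENatUnfriendly G C q := by
  choose q hq using fun x => Set.mem_iUnion.1 (hcover.ge (Set.mem_univ x))
  have hclass : colourClass q = A := by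
    ext b x
    refine ⟨?_, fun hx => eq_of_mem_of_mem hA.disjoint (hq x) hx⟩
    rintro rfl
    exact hq x
  refine ⟨q, fun x => ?_⟩
  rw [hclass]
  rcases hA.settled _ x (hq x) with htop | ⟨-, hle⟩
  · exact le_top.trans_eq htop.symm
  · exact hle

theorem exists_maximal_isSettledColouring (G : SimpleGraph V) (C : V → Bool → ℕ∞) :
    ∃ A, Maximal (IsSettledColouring G C) A := by
  refine zorn_le₀ (Set.ofPred (IsSettledColouring G C)) fun c hc hchain => ?_
  have hmem : ∀ {b x}, x ∈ sSup c b ↔ ∃ A ∈ c, x ∈ A b := by simp [sSup_apply]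
  have hdisj : Pairwise (Function.onFun Disjoint (sSup c)) := by
    intro b d hbd
    rw [Function.onFun, Set.disjoint_left]
    intro x hx hx'
    obtain ⟨A, hA, hxA⟩ := hmem.1 hx
    obtain ⟨B, hB, hxB⟩ := hmem.1 hx'
    rcases hchain.total hA hB with hAB | hBA
    · exact hbd (eq_of_mem_of_mem (hc hB).disjoint (hAB b hxA) hxB)
    · exact hbd (eq_of_mem_of_mem (hc hA).disjoint hxA (hBA d hxB))
  refine ⟨sSup c, ⟨hdisj, fun b x hx => ?_⟩, fun A hA => le_sSup hA⟩
  obtain ⟨A, hA, hxA⟩ := hmem.1 hx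
  exact ((hc hA).settled b x hxA).mono (le_sSup hA) hdisj

end PartialColourings

section Reductions

variable {V : Type*} {G : SimpleGraph V}

theorem exists_countable_neighborSet_inter_subset_or_infinite (G : SimpleGraph V) {R : Set V}
    {x : V} (hx : x ∈ R) :
    ∃ K ⊆ R, K.Countable ∧ x ∈ K ∧
      ∀ y ∈ K, G.neighborSet y ∩ R ⊆ K ∨ (G.neighborSet y ∩ K).Infinite := by
  have hT : ∀ y, ∃ T ⊆ G.neighborSet y ∩ R,
      T.Countable ∧ (G.neighborSet y ∩ R ⊆ T ∨ T.Infinite) := by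
    intro y
    rcases (G.neighborSet y ∩ R).finite_or_infinite with hfin | hinf
    · exact ⟨_, subset_rfl, hfin.countable, Or.inl subset_rfl⟩
    · obtain ⟨T, hTs, hTc, hTi⟩ := hinf.exists_subset_countable_infinite
      exact ⟨T, hTs, hTc, Or.inr hTi⟩
  choose T hTsub hTc hTor using hT
  obtain ⟨K, hKc, hxK, hK⟩ := exists_countable_closed T hTc x
  refine ⟨K ∩ R, Set.inter_subset_right, hKc.mono Set.inter_subset_left, ⟨hxK, hx⟩, ?_⟩
  rintro y ⟨hyK, -⟩
  have hsub : T y ⊆ K ∩ R :=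
    Set.subset_inter (hK y hyK) ((hTsub y).trans Set.inter_subset_right)
  refine (hTor y).imp (fun h => h.trans hsub) fun h => h.mono ?_
  exact Set.subset_inter ((hTsub y).trans Set.inter_subset_left) hsub

theorem exists_eNatUnfriendly_of_forall_countable
    (h : ∀ K : Set V, K.Countable → ∀ C, ∃ ρ, ENatUnfriendly (G.induce K) C ρ)
    (C : V → Bool → ℕ∞) : ∃ q, ENatUnfriendly G C q := by
  obtain ⟨A, hA⟩ := exists_maximal_isSettledColouring G C
  refine hA.prop.exists_eNatUnfriendly ?_
  by_contra hcover
  obtain ⟨x, hx⟩ := (Set.ne_univ_iff_exists_notMem _).1 hcover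
  obtain ⟨K, hKsub, hKc, hxK, hN⟩ :=
    exists_countable_neighborSet_inter_subset_or_infinite G (Set.mem_compl hx)
  obtain ⟨ρ, hρ⟩ := h K hKc fun y => tally G C A y
  have hdisj : ∀ b, Disjoint (A b) K := fun b =>
    (Set.disjoint_compl_right_iff_subset.2 (Set.subset_iUnion A b)).mono_right hKsub
  have hext : IsSettledColouring G C (extend A ρ) := by
    refine hA.prop.extend hdisj hρ fun y hy => (hN y hy).imp_left fun hsub z hz => ?_
    by_cases hzA : z ∈ ⋃ b, A b
    · exact Or.inl hzA
    · exact Or.inr (hsub ⟨hz, hzA⟩)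
  have hcoloured : x ∈ ⋃ b, extend A ρ b := by
    rw [iUnion_extend]
    exact Or.inr hxK
  exact hx (Set.iUnion_mono (hA.le_of_ge hext le_extend) hcoloured)

/-- The graph has no nonempty induced subgraph in which every vertex has infinite degree. -/
def NoInfiniteDegreeSubgraph (G : SimpleGraph V) : Prop :=
  ∀ W : Set V, (∀ x ∈ W, (G.neighborSet x ∩ W).Infinite) → W = ∅

/-- The largest set of vertices inducing a subgraph in which every vertex has infinite degree. -/
def infiniteCore (G : SimpleGraph V) : Set V :=
  ⋃₀ {W | ∀ x ∈ W, (G.neighborSet x ∩ W).Infinite}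

theorem infinite_neighborSet_inter_infiniteCore {x : V} (hx : x ∈ infiniteCore G) :
    (G.neighborSet x ∩ infiniteCore G).Infinite := by
  obtain ⟨W, hW, hxW⟩ := hx
  exact (hW x hxW).mono (Set.inter_subset_inter_right _ (Set.subset_sUnion_of_mem hW))

theorem noInfiniteDegreeSubgraph_induce_compl_infiniteCore (G : SimpleGraph V) :
    NoInfiniteDegreeSubgraph (G.induce (infiniteCore G)ᶜ) := by
  intro W hW
  have hcore : Subtype.val '' W ⊆ infiniteCore G := by
    refine Set.subset_sUnion_of_mem ?_
    rintro _ ⟨x, hx, rfl⟩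
    refine ((hW x hx).image Subtype.val_injective.injOn).mono ?_
    rintro _ ⟨y, ⟨hxy, hy⟩, rfl⟩
    exact ⟨hxy, y, hy, rfl⟩
  exact Set.eq_empty_of_forall_notMem fun x hx => x.2 (hcore ⟨x, hx, rfl⟩)

theorem exists_eNatUnfriendly_of_compl_infiniteCore [Countable V]
    (h : ∀ C, ∃ ρ, ENatUnfriendly (G.induce (infiniteCore G)ᶜ) C ρ) (C : V → Bool → ℕ∞) :
    ∃ q, ENatUnfriendly G C q := by
  obtain ⟨f, hf⟩ := exists_bool_splitting_of_infinite
    (fun x : infiniteCore G => G.neighborSet x ∩ infiniteCore G)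
    fun x => infinite_neighborSet_inter_infiniteCore x.2
  let A : Bool → Set V := fun b => infiniteCore G ∩ f ⁻¹' {b}
  have hA : IsSettledColouring G C A := by
    refine ⟨fun b d hbd => ?_, fun b x hx => Or.inl (tally_eq_top_of_infinite ?_)⟩
    · refine Set.disjoint_left.2 fun x hb hd => hbd ?_
      exact hb.2.symm.trans hd.2
    · rw [← Set.inter_assoc]
      exact hf ⟨x, hx.1⟩ (!b)
  obtain ⟨ρ, hρ⟩ := h fun y => tally G C A y
  have hcover : (⋃ b, A b) ∪ (infiniteCore G)ᶜ = Set.univ := by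
    ext x
    simp [A, em]
  have hext : IsSettledColouring G C (extend A ρ) :=
    hA.extend (fun b => Set.disjoint_compl_right_iff_subset.2 Set.inter_subset_left) hρ
      fun x _ => Or.inl ((Set.subset_univ _).trans hcover.ge)
  exact hext.exists_eNatUnfriendly (iUnion_extend.trans hcover)

end Reductions

section Anchor

variable {V : Type*} {G : SimpleGraph V}

theorem ENatUnfriendly.eq_not_of_encard_lt {q : V → Bool} (hq : ENatUnfriendly G 0 q) {x : V}
    {b : Bool} {S E : Set V} (hN : G.neighborSet x = S ∪ E) (hlt : E.encard < S.encard)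
    (hS : ∀ y ∈ S, q y = b) : q x = !b := by
  rw [Bool.eq_not]
  rintro rfl
  have hopp : G.neighborSet x ∩ colourClass q (!q x) ⊆ E := by
    rw [hN]
    rintro y ⟨hy | hy, hqy⟩
    · exact absurd ((hS y hy).symm.trans hqy) (Bool.not_ne_self _).symm
    · exact hy
  have hsame : S ⊆ G.neighborSet x ∩ colourClass q (q x) := fun y hy => ⟨hN.ge (Or.inl hy), hS y hy⟩
  have hle := hq x
  simp only [tally, Pi.zero_apply, zero_add] at hle
  exact hlt.not_ge ((Set.encard_le_encard hsame).trans (hle.trans (Set.encard_le_encard hopp)))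

/-- The vertices of the graph `anchor G P`, which simulates conditions on the vertices of `G`. In an
unfriendly partition the vertices `spine n` all have the colour of `hub`, and the vertices `fork n`
the other one. -/
inductive AnchorVertex (V : Type*)
  | base (x : V)
  | hub
  | spine (n : ℕ)
  | strut (n : ℕ) (j : Fin (3 * n))
  | fork (n : ℕ)
  deriving Countable

namespace AnchorVertex

/-- The gadget vertices to which `base x` may be joined, indexed by the colour they take when `hub`
has colour `true`. -/
def hook : Bool → ℕ → AnchorVertex V
  | true => spine
  | false => fork

/-- The edges of `anchor G P`, each in one direction. -/
def Link (G : SimpleGraph V) (P : Bool → V → Set ℕ) : AnchorVertex V → AnchorVertex V → Prop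
  | base x, base y => G.Adj x y
  | base x, spine n => n ∈ P true x
  | base x, fork n => n ∈ P false x
  | hub, strut _ _ => True
  | strut n _, spine k => k = n ∨ k + 1 = n
  | fork n, spine k => n = k / 2
  | _, _ => False

end AnchorVertex

open AnchorVertex

/-- The graph `G` together with a gadget whose colours are forced, where `P b x` is the set of
indices `n` for which the vertex `x` of `G` is joined to `hook b n`. The number of struts between
successive spine vertices increases, so that upward struts outnumber all other neighbours of a spine
vertex. -/
def anchor (G : SimpleGraph V) (P : Bool → V → Set ℕ) : SimpleGraph (AnchorVertex V) where
  Adj s t := Link G P s t ∨ Link G P t s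
  symm := ⟨fun _ _ => Or.symm⟩
  loopless := ⟨fun s h => by cases s <;> simp [Link] at h⟩

variable {P : Bool → V → Set ℕ}

theorem neighborSet_anchor_base (x : V) : (anchor G P).neighborSet (base x) =
    (⋃ b, hook b '' P b x) ∪ base '' G.neighborSet x := by
  ext t
  cases t <;> simp [anchor, Link, hook, G.adj_comm]

theorem neighborSet_anchor_hub :
    (anchor G P).neighborSet hub = ⋃ n, Set.range (strut n) := by
  ext t
  cases t <;> simp [anchor, Link]

theorem neighborSet_anchor_strut (n : ℕ) (j : Fin (3 * (n + 1))) :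
    (anchor G P).neighborSet (strut (n + 1) j) = {hub, spine n, spine (n + 1)} := by
  ext t
  cases t <;> simp [anchor, Link, or_comm]

theorem exists_strut_eq_strut {m n : ℕ} {j : Fin (3 * m)} :
    (∃ i, (strut n i : AnchorVertex V) = strut m j) ↔ n = m := by
  refine ⟨fun ⟨_, h⟩ => (strut.inj h).1, ?_⟩
  rintro rfl
  exact ⟨j, rfl⟩

theorem neighborSet_anchor_spine (n : ℕ) : (anchor G P).neighborSet (spine n) =
    Set.range (strut (n + 1)) ∪
      (Set.range (strut n) ∪ {fork (n / 2)} ∪ base '' {x | n ∈ P true x}) := by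
  ext t
  cases t <;> simp [anchor, Link, exists_strut_eq_strut, -strut.injEq, or_comm]

theorem neighborSet_anchor_fork (n : ℕ) : (anchor G P).neighborSet (fork n) =
    {spine (2 * n), spine (2 * n + 1)} ∪ base '' {x | n ∈ P false x} := by
  have hhalf : ∀ k, n = k / 2 ↔ k = 2 * n ∨ k = 2 * n + 1 := by omega
  ext t
  cases t <;> simp [anchor, Link, hhalf]

theorem encard_range_strut (n : ℕ) :
    (Set.range (strut n : _ → AnchorVertex V)).encard = (3 * n : ℕ) := by
  have hinj : Function.Injective (strut n : _ → AnchorVertex V) := fun i j h => by simpa using h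
  rw [← Set.image_univ, hinj.encard_image, Set.encard_univ, ENat.card_eq_coe_fintype_card,
    Fintype.card_fin]

section Ports

variable (hP : ∀ b, Pairwise (Function.onFun Disjoint (P b)))
include hP

theorem encard_image_base_le_one (b : Bool) (n : ℕ) :
    ((base : V → AnchorVertex V) '' {x | n ∈ P b x}).encard ≤ 1 := by
  refine (Set.encard_image_le _ _).trans (Set.encard_le_one_iff.2 fun x y hx hy => ?_)
  exact (hP b).eq (Set.not_disjoint_iff.2 ⟨n, hx, hy⟩)

theorem encard_neighborSet_anchor_spine_rest_lt (n : ℕ) :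
    (Set.range (strut n) ∪ {fork (n / 2)} ∪ base '' {x | n ∈ P true x}).encard <
      (Set.range (strut (n + 1) : _ → AnchorVertex V)).encard := by
  calc _ ≤ (Set.range (strut n : _ → AnchorVertex V)).encard + 1 + 1 := by
        refine (Set.encard_union_le _ _).trans ?_
        refine add_le_add ((Set.encard_union_le _ _).trans ?_) (encard_image_base_le_one hP true n)
        rw [Set.encard_singleton]
    _ = (3 * n + 2 : ℕ) := by rw [encard_range_strut]; push_cast; ring
    _ < (3 * (n + 1) : ℕ) := Nat.cast_lt.2 (by omega)
    _ = _ := (encard_range_strut (n + 1)).symm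

theorem noInfiniteDegreeSubgraph_anchor (hG : NoInfiniteDegreeSubgraph G) :
    NoInfiniteDegreeSubgraph (anchor G P) := by
  intro W hW
  have notMem_of_finite {t} (ht : ((anchor G P).neighborSet t).Finite) : t ∉ W :=
    fun htW => hW t htW (ht.subset Set.inter_subset_left)
  have hports : ∀ b n, (base '' {x | n ∈ P b x} : Set (AnchorVertex V)).Finite := fun b n =>
    Set.finite_of_encard_le_coe (encard_image_base_le_one hP b n)
  have hspine : ∀ n, spine n ∉ W := fun n => notMem_of_finite <| by
    rw [neighborSet_anchor_spine]
    exact (Set.finite_range _).union (((Set.finite_range _).union (Set.finite_singleton _)).union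
      (hports true n))
  have hfork : ∀ n, fork n ∉ W := fun n => notMem_of_finite <| by
    rw [neighborSet_anchor_fork]
    exact (Set.toFinite _).union (hports false n)
  have hstrut : ∀ n j, strut n j ∉ W := by
    rintro (_ | n) j
    · exact j.elim0
    · refine notMem_of_finite ?_
      rw [neighborSet_anchor_strut]
      exact Set.toFinite _
  have hhub : hub ∉ W := by
    intro hmem
    obtain ⟨t, ht, htW⟩ := (hW hub hmem).nonempty
    rw [neighborSet_anchor_hub] at ht
    obtain ⟨n, j, rfl⟩ := Set.mem_iUnion.1 ht
    exact hstrut n j htW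
  have hbase : base ⁻¹' W = ∅ := hG _ fun x hx => by
    refine Set.Infinite.of_image base ((hW _ hx).mono ?_)
    rw [neighborSet_anchor_base]
    rintro t ⟨ht | ⟨y, hy, rfl⟩, htW⟩
    · obtain ⟨b, n, -, rfl⟩ := Set.mem_iUnion.1 ht
      cases b
      · exact absurd htW (hfork n)
      · exact absurd htW (hspine n)
    · exact ⟨y, ⟨hy, htW⟩, rfl⟩
  refine Set.eq_empty_of_forall_notMem fun t => ?_
  cases t with
  | base x => exact Set.eq_empty_iff_forall_notMem.1 hbase x
  | hub => exact hhub
  | spine n => exact hspine n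
  | strut n j => exact hstrut n j
  | fork n => exact hfork n

section ForcedColours

variable {q : AnchorVertex V → Bool} (hq : ENatUnfriendly (anchor G P) 0 q)
include hq

omit hP in
theorem strut_eq_not {b : Bool} {n : ℕ} {s t u : AnchorVertex V}
    (hperm : ({s, t} ∪ {u} : Set (AnchorVertex V)) = {hub, spine n, spine (n + 1)}) (hst : s ≠ t)
    (hs : q s = b) (ht : q t = b) (j : Fin (3 * (n + 1))) : q (strut (n + 1) j) = !b := by
  refine hq.eq_not_of_encard_lt ((neighborSet_anchor_strut n j).trans hperm.symm) ?_ ?_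
  · rw [Set.encard_pair hst, Set.encard_singleton]
    exact Nat.one_lt_ofNat
  · rintro _ (rfl | rfl)
    exacts [hs, ht]

theorem spine_of_spine_succ (hhub : q hub = true) {n : ℕ} (hn : q (spine (n + 1)) = true) :
    q (spine n) = true := by
  refine hq.eq_not_of_encard_lt (b := false) (neighborSet_anchor_spine n)
    (encard_neighborSet_anchor_spine_rest_lt hP n) ?_
  rintro _ ⟨j, rfl⟩
  refine strut_eq_not hq (b := true) (s := hub) (t := spine (n + 1)) (u := spine n) ?_ nofun
    hhub hn j
  grind

omit hP in
theorem exists_spine_ge (hhub : q hub = true) (N : ℕ) : ∃ n ≥ N, q (spine n) = true := by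
  by_contra! hspine
  simp only [ne_eq, Bool.not_eq_true] at hspine
  have hN : (anchor G P).neighborSet hub =
      (⋃ n ∈ Set.Ioi N, Set.range (strut n)) ∪ ⋃ n ∈ Set.Iic N, Set.range (strut n) := by
    rw [neighborSet_anchor_hub, ← Set.biUnion_union, Set.union_comm, Set.Iic_union_Ioi,
      Set.biUnion_univ]
  have hfin : (⋃ n ∈ Set.Iic N, Set.range (strut n : _ → AnchorVertex V)).Finite :=
    (Set.finite_Iic N).biUnion fun n _ => Set.finite_range _
  have hinf : (⋃ n ∈ Set.Ioi N, Set.range (strut n : _ → AnchorVertex V)).Infinite := by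
    have hinj : Function.Injective fun n => (strut (N + n + 1) 0 : AnchorVertex V) :=
      fun m n h => by simpa using (strut.inj h).1
    refine (Set.infinite_range_of_injective hinj).mono ?_
    rintro _ ⟨n, rfl⟩
    exact Set.mem_biUnion (Set.mem_Ioi.2 (by omega)) (Set.mem_range_self 0)
  have hhub' : q hub = !true := by
    refine hq.eq_not_of_encard_lt hN (hinf.encard_eq ▸ hfin.encard_lt_top) fun t ht => ?_
    simp only [Set.mem_iUnion, Set.mem_range] at ht
    obtain ⟨_ | n, hn, j, rfl⟩ := ht
    · exact j.elim0
    have hn' : N ≤ n := Nat.lt_succ_iff.1 hn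
    refine strut_eq_not hq (b := false) (s := spine n) (t := spine (n + 1)) (u := hub) ?_ (by simp)
      (hspine n hn') (hspine (n + 1) (by omega)) j
    grind
  simp [hhub] at hhub'

theorem spine_eq_true (hhub : q hub = true) (n : ℕ) : q (spine n) = true := by
  obtain ⟨m, hnm, hm⟩ := exists_spine_ge hq hhub n
  have hanti : Antitone fun k => q (spine k) = true :=
    antitone_nat_of_succ_le fun k => spine_of_spine_succ hP hq hhub
  exact hanti hnm hm

theorem hook_eq (hhub : q hub = true) (b : Bool) (n : ℕ) : q (hook b n) = b := by
  have hspine := spine_eq_true hP hq hhub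
  cases b with
  | true => exact hspine n
  | false =>
    refine hq.eq_not_of_encard_lt (b := true) (neighborSet_anchor_fork n) ?_ ?_
    · rw [Set.encard_pair (by simp)]
      exact (encard_image_base_le_one hP false n).trans_lt Nat.one_lt_ofNat
    · rintro _ (rfl | rfl)
      exacts [hspine _, hspine _]

theorem tally_anchor_base (hhub : q hub = true) (x : V) (b : Bool) :
    tally (anchor G P) 0 (colourClass q) (base x) b =
      tally G (fun x b => (P b x).encard) (colourClass (q ∘ base)) x b := by
  have hsplit : (anchor G P).neighborSet (base x) ∩ colourClass q b =
      hook b '' P b x ∪ base '' (G.neighborSet x ∩ colourClass (q ∘ base) b) := by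
    rw [neighborSet_anchor_base, Set.union_inter_distrib_right]
    congr 1
    · ext t
      constructor
      · rintro ⟨ht, htb⟩
        obtain ⟨d, n, hn, rfl⟩ := Set.mem_iUnion.1 ht
        obtain rfl : d = b := (hook_eq hP hq hhub d n).symm.trans htb
        exact ⟨n, hn, rfl⟩
      · rintro ⟨n, hn, rfl⟩
        exact ⟨Set.mem_iUnion.2 ⟨b, n, hn, rfl⟩, hook_eq hP hq hhub b n⟩
    · exact (Set.image_inter_preimage _ _ _).symm
  have hdisj : Disjoint (hook b '' P b x)
      (base '' (G.neighborSet x ∩ colourClass (q ∘ base) b)) := by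
    rw [Set.disjoint_left]
    rintro _ ⟨n, -, rfl⟩ ⟨y, -, hy⟩
    cases b <;> simp [hook] at hy
  have hhook : Function.Injective (hook b : ℕ → AnchorVertex V) := by
    cases b
    exacts [fun _ _ => fork.inj, fun _ _ => spine.inj]
  have hbase : Function.Injective (base : V → AnchorVertex V) := fun _ _ => base.inj
  simp only [tally, Pi.zero_apply, zero_add]
  rw [hsplit, Set.encard_union_eq hdisj, hhook.encard_image, hbase.encard_image]

theorem ENatUnfriendly.comp_base (hhub : q hub = true) :
    ENatUnfriendly G (fun x b => (P b x).encard) (q ∘ base) := fun x => by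
  have hle := hq (base x)
  rwa [tally_anchor_base hP hq hhub, tally_anchor_base hP hq hhub] at hle

end ForcedColours

end Ports

end Anchor

section Cardinals

variable {V : Type u} {G : SimpleGraph V}

theorem le_or_aleph0_le_of_toENat_le {a b : Cardinal.{u}} (h : toENat a ≤ toENat b) :
    a ≤ b ∨ ℵ₀ ≤ a ∧ ℵ₀ ≤ b := by
  rcases lt_or_ge b ℵ₀ with hb | hb
  · exact Or.inl ((toENat_le_iff_of_lt_aleph0 hb).1 h)
  · exact (le_total a ℵ₀).imp (fun ha => ha.trans hb) fun ha => ⟨ha, hb⟩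

theorem UnfriendlyPartition.exists_eNatUnfriendly {π : V → Fin 2} (hπ : UnfriendlyPartition G π)
    (r : V) : ∃ q : V → Bool, q r = true ∧ ENatUnfriendly G 0 q := by
  refine ⟨fun x => decide (π x = π r), decide_eq_true rfl, fun x => ?_⟩
  have hle := OrderHomClass.mono toENat (hπ x)
  rw [Set.toENat_cardinalMk_subtype, Set.toENat_cardinalMk_subtype] at hle
  have hiff : ∀ a b c : Fin 2, decide (a = c) = decide (b = c) ↔ a = b := by decide
  have hiff' : ∀ a b c : Fin 2, (decide (a = c) = !decide (b = c)) ↔ a ≠ b := by decide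
  simp only [tally, colourClass, Set.preimage, Set.mem_singleton_iff, hiff, hiff', Pi.zero_apply,
    zero_add]
  exact hle

theorem ENatUnfriendly.condMuUnfriendly {C : V → Cardinal.{u} × Cardinal.{u}} {q : V → Bool}
    (hq : ENatUnfriendly G (fun x b => toENat (cond b (C x).2 (C x).1)) q) :
    CondMuUnfriendly G C ℵ₀ (finTwoEquiv.symm ∘ q) := by
  have htally : ∀ x (b : Bool) (κ : Cardinal.{u}), toENat (κ + #{y // G.Adj x y ∧
      (finTwoEquiv.symm ∘ q) y = finTwoEquiv.symm b}) =
      toENat κ + (G.neighborSet x ∩ colourClass q b).encard := by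
    intro x b κ
    rw [map_add, Set.toENat_cardinalMk_subtype]
    simp only [Function.comp_apply, EmbeddingLike.apply_eq_iff_eq]
    rfl
  intro x
  have hle := hq x
  constructor <;> intro hx
  · have hqx : q x = false := finTwoEquiv.symm.injective hx
    refine le_or_aleph0_le_of_toENat_le ?_
    rw [hqx] at hle
    exact (htally x false _).trans_le (hle.trans_eq (htally x true _).symm)
  · have hqx : q x = true := finTwoEquiv.symm.injective hx
    refine (le_or_aleph0_le_of_toENat_le ?_).imp_right And.symm
    rw [hqx] at hle
    exact (htally x true _).trans_le (hle.trans_eq (htally x false _).symm)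

theorem NoInfiniteDegreeSubgraph.exists_eNatUnfriendly [Countable V]
    (hG : NoInfiniteDegreeSubgraph G)
    (h : ∀ H : SimpleGraph (AnchorVertex V), NoInfiniteDegreeSubgraph H →
      ∃ π : AnchorVertex V → Fin 2, UnfriendlyPartition H π)
    (C : V → Bool → ℕ∞) : ∃ q, ENatUnfriendly G C q := by
  choose P hP hcard using fun b => exists_pairwise_disjoint_encard_eq fun x => C x b
  obtain ⟨π, hπ⟩ := h (anchor G P) (noInfiniteDegreeSubgraph_anchor hP hG)
  obtain ⟨q, hhub, hq⟩ := hπ.exists_eNatUnfriendly AnchorVertex.hub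
  have hC : (fun x b => (P b x).encard) = C := funext₂ fun x b => hcard b x
  exact ⟨_, hC ▸ hq.comp_base hP hhub⟩

end Cardinals

theorem stmt13
    (hyp : ∀ (V : Type u) (G : SimpleGraph V), Countable V →
      (∀ W : Set V, (∀ x ∈ W, (G.neighborSet x ∩ W).Infinite) → W = ∅) →
      ∃ π : V → Fin 2, UnfriendlyPartition G π) :
    ∀ (V : Type u) (G : SimpleGraph V) (C : V → Cardinal.{u} × Cardinal.{u}),
      ∃ π : V → Fin 2, CondMuUnfriendly G C ℵ₀ π := by
  intro V G C
  have hcountable : ∀ K : Set V, K.Countable → ∀ c, ∃ ρ, ENatUnfriendly (G.induce K) c ρ := by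
    intro K hK c
    have : Countable K := hK.to_subtype
    refine exists_eNatUnfriendly_of_compl_infiniteCore (fun c' => ?_) c
    have hres := noInfiniteDegreeSubgraph_induce_compl_infiniteCore (G.induce K)
    exact hres.exists_eNatUnfriendly (fun H => hyp _ H inferInstance) c'
  obtain ⟨q, hq⟩ := exists_eNatUnfriendly_of_forall_countable hcountable
    fun x b => toENat (cond b (C x).2 (C x).1)
  exact ⟨_, hq.condMuUnfriendly⟩
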